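/- Let A, B be unital C*-algebras and P : A → B an orthogonally additive n-homogeneous polynomial such that h := P(1) is unitary, B = span P(A), and ‖P(x)‖ = ‖x‖ⁿ for every normal element x of A. Then there is a Jordan *-isomorphism J : A → B such that P(a) = h J(a)ⁿ for all a ∈ A. -/

import Mathlib

/-- `P : E → F` is a bounded `n`-homogeneous polynomial: `P x = L(x,…,x)` for a bounded
symmetric `n`-linear map `L`. -/
def IsHomogPolynomial {E F : Type*} [NormedAddCommGroup E] [NormedSpace ℂ E]
    [NormedAddCommGroup F] [NormedSpace ℂ F] (n : ℕ) (P : E → F) : Prop :=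
  ∃ L : ContinuousMultilinearMap ℂ (fun _ : Fin n => E) F,
    (∀ (v : Fin n → E) (σ : Equiv.Perm (Fin n)), (L fun i => v (σ i)) = L v) ∧
    ∀ x : E, P x = L fun _ => x

/-!
Write `n = m + 1`. The idea is to find a bounded linear `T` with `P a = T (a ^ n)`. On `C(X, ℝ)` one
inducts on the degree: the derivative of `P` in the direction `1` is again orthogonally additive, of
degree `n - 1`, hence of the form `S (f ^ (n - 1))`. Then `κ f = P f - n⁻¹ • S (f ^ n)` is
orthogonally additive, invariant under adding constants and `o(‖f‖)` at `0`; cutting the range of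
`f` into `N` thin horizontal slices gives `‖κ f‖ = N * o(1 / N)`, so `κ = 0`. Functional calculus
transports the formula, with `T = n⁻¹ • P' 1`, to selfadjoint elements of a C⋆-algebra, and analytic
continuation along `ℜ a + z • ℑ a` to all elements.

Put `J = star (P 1) * T`, which is unital. For selfadjoint `a` and real `s ≠ 0`, the element
`a + is` has a normal `n`-th root, so `‖J a + is‖ = ‖a + is‖`. Since `b` is selfadjoint precisely
when `‖b + is‖² - s²` is bounded above in `s`, the map `J` is hermitian; being also isometric on
selfadjoint elements, it is positive with positive inverse. Kadison's inequality
`φ a ^ 2 ≤ φ (a ^ 2)`, applied to `J` and to its inverse, gives `J (a ^ 2) = J a ^ 2`.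
-/

open Filter Topology Asymptotics
open Complex (I)

/-- Positive homogeneity of degree `n`: scaling is tested on `t > 0` only, so that the notion makes
sense over the reals and passes to the derivative, in degree `n - 1`, by the chain rule. -/
def PosHomogeneous {E F : Type*} [AddCommGroup E] [Module ℝ E] [AddCommGroup F]
    [Module ℝ F] (n : ℕ) (P : E → F) : Prop :=
  ∀ t : ℝ, 0 < t → ∀ x, P (t • x) = t ^ n • P x

namespace PosHomogeneous
section Module

variable {E F : Type*} [AddCommGroup E] [Module ℝ E] [AddCommGroup F] [Module ℝ F] {n : ℕ}
  {P Q : E → F}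

lemma map_zero (hP : PosHomogeneous (n + 1) P) : P 0 = 0 := by
  have h2 : P 0 = (2 : ℝ) ^ (n + 1) • P 0 := by simpa using hP 2 two_pos 0
  have hne : (2 : ℝ) ^ (n + 1) - 1 ≠ 0 :=
    (sub_pos.2 (one_lt_pow₀ one_lt_two n.succ_ne_zero)).ne'
  refine (smul_eq_zero.1 ?_).resolve_left hne
  rw [sub_smul, one_smul, ← h2, sub_self]

lemma sub (hP : PosHomogeneous n P) (hQ : PosHomogeneous n Q) :
    PosHomogeneous n fun x => P x - Q x := fun t ht x => by
  simp only [hP t ht, hQ t ht, smul_sub]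

end Module

section Normed

variable {E F : Type*} [NormedAddCommGroup E] [NormedSpace ℝ E] [NormedAddCommGroup F]
  [NormedSpace ℝ F] {n : ℕ} {P : E → F}

protected lemma fderiv (hP : PosHomogeneous (n + 1) P) : PosHomogeneous n (fderiv ℝ P) := by
  intro t ht x
  have hscale : (fun y => P (t • y)) = t ^ (n + 1) • P := funext (hP t ht)
  have hchain : t • fderiv ℝ P (t • x) = t • t ^ n • fderiv ℝ P x := by
    rw [← fderiv_comp_smul, hscale, fderiv_const_smul_field, Pi.smul_apply, smul_smul, pow_succ']
  exact smul_right_injective _ ht.ne' hchain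

lemma eq_fderiv_zero (hP : PosHomogeneous 1 P) (hd : DifferentiableAt ℝ P 0) (x : E) :
    P x = fderiv ℝ P 0 x := by
  have hslope : (fun t : ℝ => t⁻¹ • (P (t • x) - P 0)) =ᶠ[𝓝[>] 0] fun _ => P x := by
    filter_upwards [self_mem_nhdsWithin] with t ht
    rw [hP.map_zero, sub_zero, hP t ht, pow_one, inv_smul_smul₀ (ne_of_gt ht)]
  have hlim : Tendsto (fun t : ℝ => t⁻¹ • (P (t • x) - P 0)) (𝓝[>] 0) (𝓝 (fderiv ℝ P 0 x)) := by
    simpa using (hd.hasFDerivAt.hasLineDerivAt x).tendsto_slope_zero_right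
  exact tendsto_nhds_unique (tendsto_const_nhds.congr' hslope.symm) hlim

lemma isLittleO_self (hP : PosHomogeneous (n + 2) P) (hd : DifferentiableAt ℝ P 0) :
    P =o[𝓝 0] fun x : E => x := by
  have h := hd.hasFDerivAt.isLittleO
  rw [hP.fderiv.map_zero] at h
  simpa [hP.map_zero] using h

end Normed
end PosHomogeneous

section OrthogonallyAdditive

/-- Additivity on orthogonal pairs. In a C⋆-algebra orthogonality is often taken to mean
`a * star b = star b * a = 0`; here it is `a * b = b * a = 0`, which needs no involution. -/
def OrthogonallyAdditive {R F : Type*} [NonUnitalNonAssocSemiring R] [Add F] (P : R → F) : Prop :=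
  ∀ a b, a * b = 0 → b * a = 0 → P (a + b) = P a + P b

lemma OrthogonallyAdditive.comp {R S F G : Type*} [NonUnitalNonAssocSemiring R]
    [NonUnitalNonAssocSemiring S] [Add F] [FunLike G R S] [NonUnitalRingHomClass G R S]
    {P : S → F} (hP : OrthogonallyAdditive P) (φ : G) : OrthogonallyAdditive (P ∘ φ) :=
  fun a b hab hba => by
    simp only [Function.comp_apply, map_add]
    exact hP _ _ (by rw [← map_mul, hab, map_zero]) (by rw [← map_mul, hba, map_zero])

lemma OrthogonallyAdditive.sub {R F : Type*} [NonUnitalNonAssocSemiring R] [AddCommGroup F]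
    {P Q : R → F} (hP : OrthogonallyAdditive P) (hQ : OrthogonallyAdditive Q) :
    OrthogonallyAdditive fun a => P a - Q a := fun a b hab hba => by
  simp only [hP a b hab hba, hQ a b hab hba, add_sub_add_comm]

lemma orthogonallyAdditive_pow {R : Type*} [Semiring R] (n : ℕ) :
    OrthogonallyAdditive fun a : R => a ^ (n + 1) := by
  intro a b hab hba
  induction n with
  | zero => simp only [zero_add, pow_one]
  | succ n ih =>
    have hab' : a ^ (n + 1) * b = 0 := by rw [pow_succ, mul_assoc, hab, mul_zero]
    have hba' : b ^ (n + 1) * a = 0 := by rw [pow_succ, mul_assoc, hba, mul_zero]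
    simp only [pow_succ _ (n + 1), ih, add_mul, mul_add, hab', hba', add_zero, zero_add]

variable {R F : Type*} [NormedRing R] [NormedAlgebra ℝ R] [NormedAddCommGroup F]
  [NormedSpace ℝ F] {P : R → F}

lemma OrthogonallyAdditive.fderiv_add_apply (hP : OrthogonallyAdditive P)
    (hd : Differentiable ℝ P) {f g c : R} (hfg : f * g = 0) (hgf : g * f = 0) (hcg : c * g = 0)
    (hgc : g * c = 0) : fderiv ℝ P (f + g) c = fderiv ℝ P f c := by
  have hline : ∀ t : ℝ, P (f + g + t • c) = P (f + t • c) + P g := fun t => by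
    rw [add_right_comm]
    refine hP _ _ ?_ ?_
    · rw [add_mul, smul_mul_assoc, hfg, hcg, smul_zero, add_zero]
    · rw [mul_add, mul_smul_comm, hgf, hgc, smul_zero, add_zero]
  rw [← (hd _).lineDeriv_eq_fderiv, ← (hd _).lineDeriv_eq_fderiv]
  simp only [lineDeriv, hline, deriv_add_const]

-- The unit splits as `w + (1 - w)`, each part being orthogonal to one of the two summands.
lemma OrthogonallyAdditive.fderiv_add_apply_one (hP : OrthogonallyAdditive P)
    (hd : Differentiable ℝ P) (h0 : fderiv ℝ P 0 = 0) {f g w : R} (hwg : w * g = 0)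
    (hgw : g * w = 0) (hwf : (1 - w) * f = 0) (hfw : f * (1 - w) = 0) :
    fderiv ℝ P (f + g) 1 = fderiv ℝ P f 1 + fderiv ℝ P g 1 := by
  have hfg : f * g = 0 := by
    rw [mul_sub, mul_one, sub_eq_zero] at hfw
    rw [hfw, mul_assoc, hwg, mul_zero]
  have hgf : g * f = 0 := by
    rw [sub_mul, one_mul, sub_eq_zero] at hwf
    rw [hwf, ← mul_assoc, hgw, zero_mul]
  have hvanish : ∀ {a c : R}, c * a = 0 → a * c = 0 → fderiv ℝ P a c = 0 := fun {a c} hca hac => by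
    simpa [h0] using hP.fderiv_add_apply hd (zero_mul a) (mul_zero a) hca hac
  have hw : fderiv ℝ P (f + g) w = fderiv ℝ P f w := hP.fderiv_add_apply hd hfg hgf hwg hgw
  have hw' : fderiv ℝ P (f + g) (1 - w) = fderiv ℝ P g (1 - w) := by
    rw [add_comm, hP.fderiv_add_apply hd hgf hfg hwf hfw]
  calc fderiv ℝ P (f + g) 1 = fderiv ℝ P (f + g) w + fderiv ℝ P (f + g) (1 - w) := by
        rw [← map_add, add_sub_cancel]
    _ = (fderiv ℝ P f w + fderiv ℝ P f (1 - w)) + (fderiv ℝ P g w + fderiv ℝ P g (1 - w)) := by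
        rw [hw, hw', hvanish hwf hfw, hvanish hwg hgw, add_zero, zero_add]
    _ = fderiv ℝ P f 1 + fderiv ℝ P g 1 := by simp only [← map_add, add_sub_cancel]

lemma map_add_algebraMap_of_fderiv_one_eq_zero (hd : Differentiable ℝ P)
    (h : ∀ a, fderiv ℝ P a 1 = 0) (a : R) (c : ℝ) : P (a + algebraMap ℝ R c) = P a := by
  have hderiv : ∀ s : ℝ, HasDerivAt (fun s : ℝ => P (a + s • 1)) 0 s := fun s => by
    have hline : HasDerivAt (fun s : ℝ => a + s • (1 : R)) 1 s := by
      simpa using ((hasDerivAt_id s).smul_const (1 : R)).const_add a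
    have hcomp := (hd (a + s • 1)).hasFDerivAt.comp_hasDerivAt s hline
    rwa [h] at hcomp
  simpa [Algebra.algebraMap_eq_smul_one] using
    is_const_of_deriv_eq_zero (fun s => (hderiv s).differentiableAt) (fun s => (hderiv s).deriv) c 0

lemma fderiv_clm_pow_apply_of_commute (T : R →L[ℝ] F) (n : ℕ) {a c : R} (hac : Commute a c) :
    fderiv ℝ (fun a => T (a ^ n)) a c = n • T (a ^ (n - 1) * c) := by
  have hterm : ∀ i ∈ Finset.range n, a ^ (n - 1 - i) * c * a ^ i = a ^ (n - 1) * c := fun i hi => by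
    have hi' : i ≤ n - 1 := Nat.le_sub_one_of_lt (Finset.mem_range.1 hi)
    rw [mul_assoc, ← (hac.pow_left i).eq, ← mul_assoc, ← pow_add, Nat.sub_add_cancel hi']
  have hderiv : fderiv ℝ (fun a => T (a ^ n)) a = _ :=
    (T.hasFDerivAt.comp a (hasStrictFDerivAt_pow' (𝕜 := ℝ) n).hasFDerivAt).fderiv
  simp [hderiv, Finset.sum_congr rfl hterm, -nsmul_eq_mul]

end OrthogonallyAdditive

section ContinuousMap

variable {X : Type*} [TopologicalSpace X]

lemma OrthogonallyAdditive.map_eq_map_inf_add_map_sup {F : Type*} [Add F] {κ : C(X, ℝ) → F}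
    (hκ : OrthogonallyAdditive κ) (htrans : ∀ f (c : ℝ), κ (f + algebraMap ℝ _ c) = κ f)
    (f : C(X, ℝ)) (c : ℝ) :
    κ f = κ (f ⊓ algebraMap ℝ _ c) + κ ((f - algebraMap ℝ _ c) ⊔ 0) := by
  have hsub : ∀ g, κ (g - algebraMap ℝ _ c) = κ g := fun g => by
    simpa only [sub_add_cancel] using (htrans (g - algebraMap ℝ _ c) c).symm
  have hsplit : f - algebraMap ℝ _ c =
      (f ⊓ algebraMap ℝ _ c - algebraMap ℝ _ c) + (f - algebraMap ℝ _ c) ⊔ 0 := by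
    ext x
    rcases le_total (f x) c with h | h <;> simp [h]
  have horth : (f ⊓ algebraMap ℝ _ c - algebraMap ℝ _ c) * ((f - algebraMap ℝ _ c) ⊔ 0) = 0 := by
    ext x
    rcases le_total (f x) c with h | h <;> simp [h]
  calc κ f = κ (f - algebraMap ℝ _ c) := (hsub f).symm
    _ = κ (f ⊓ algebraMap ℝ _ c - algebraMap ℝ _ c) + κ ((f - algebraMap ℝ _ c) ⊔ 0) := by
      rw [← hκ _ _ horth (by rw [mul_comm, horth]), ← hsplit]
    _ = κ (f ⊓ algebraMap ℝ _ c) + κ ((f - algebraMap ℝ _ c) ⊔ 0) := by rw [hsub]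

variable [CompactSpace X]

-- Soft thresholding at height `ε` makes room for a cut-off function with values in `[0, 1]`.
lemma exists_cutoff_of_mul_eq_zero {f g : C(X, ℝ)} (hfg : f * g = 0) {ε : ℝ} (hε : 0 < ε) :
    ∃ f' w : C(X, ℝ), ‖f - f'‖ ≤ ε ∧ w * g = 0 ∧ (1 - w) * f' = 0 := by
  have hzero : ∀ x, f x = 0 ∨ g x = 0 := fun x => mul_eq_zero.1 (congr($hfg x))
  refine ⟨⟨fun x => f x - max (-ε) (min ε (f x)), by fun_prop⟩,
    ⟨fun x => min 1 (|f x| / ε), by fun_prop⟩, ?_, ?_, ?_⟩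
  · refine (ContinuousMap.norm_le _ hε.le).2 fun x => ?_
    simp only [ContinuousMap.sub_apply, ContinuousMap.coe_mk, sub_sub_cancel, Real.norm_eq_abs]
    exact abs_le.2 ⟨le_max_left _ _, max_le (by linarith) (min_le_left _ _)⟩
  · ext x
    rcases hzero x with hx | hx <;> simp [hx]
  · ext x
    rcases le_total |f x| ε with hx | hx
    · obtain ⟨h₁, h₂⟩ := abs_le.1 hx
      simp [min_eq_right h₂, max_eq_right h₁]
    · simp [min_eq_left ((one_le_div hε).2 hx)]

variable {F : Type*} [NormedAddCommGroup F] {κ : C(X, ℝ) → F}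

lemma OrthogonallyAdditive.norm_le_of_le_natCast_mul (hκ : OrthogonallyAdditive κ)
    (htrans : ∀ f (c : ℝ), κ (f + algebraMap ℝ _ c) = κ f) {δ C : ℝ} (hδ : 0 ≤ δ)
    (hC : ∀ f, ‖f‖ ≤ δ → ‖κ f‖ ≤ C) (N : ℕ) {f : C(X, ℝ)} (hf0 : 0 ≤ f)
    (hf : ∀ x, f x ≤ N * δ) : ‖κ f‖ ≤ N * C := by
  induction N generalizing f with
  | zero =>
    have hf' : f = 0 := by
      ext x
      exact le_antisymm (by simpa using hf x) (hf0 x)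
    have h0 : κ 0 = 0 := by simpa using hκ 0 0 (zero_mul 0) (zero_mul 0)
    simp [hf', h0]
  | succ N ih =>
    have hNδ : 0 ≤ N * δ := by positivity
    have hlow : ‖κ (f ⊓ algebraMap ℝ _ (N * δ))‖ ≤ N * C :=
      ih (fun x => le_inf (hf0 x) (by simpa using hNδ)) fun x => by simp
    have hhigh : ‖κ ((f - algebraMap ℝ _ (N * δ)) ⊔ 0)‖ ≤ C := by
      refine hC _ ((ContinuousMap.norm_le _ hδ).2 fun x => ?_)
      have hx := hf x
      push_cast at hx
      simp only [ContinuousMap.sup_apply, ContinuousMap.sub_apply, ContinuousMap.zero_apply,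
        algebraMap_apply, Real.norm_eq_abs, abs_of_nonneg (le_max_right _ (0 : ℝ)),
        smul_eq_mul, mul_one]
      exact max_le (by linarith) hδ
    rw [hκ.map_eq_map_inf_add_map_sup htrans f (N * δ)]
    refine (norm_add_le_of_le hlow hhigh).trans_eq ?_
    push_cast
    ring

lemma OrthogonallyAdditive.eq_zero_of_isLittleO (hκ : OrthogonallyAdditive κ)
    (htrans : ∀ f (c : ℝ), κ (f + algebraMap ℝ _ c) = κ f) (hsmall : κ =o[𝓝 0] fun f => f)
    (f : C(X, ℝ)) : κ f = 0 := by
  let M : ℝ := ‖f‖ + ‖f‖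
  suffices ∀ ε > 0, ‖κ f‖ ≤ M * ε by
    refine norm_le_zero_iff.1 (ge_of_tendsto (f := fun ε => M * ε) (x := 𝓝[>] 0) ?_
      (eventually_mem_nhdsWithin.mono this))
    exact ((continuous_const_mul M).tendsto' 0 0 (mul_zero M)).mono_left nhdsWithin_le_nhds
  intro ε hε
  obtain ⟨r, hr, hκr⟩ := Metric.eventually_nhds_iff.1 (hsmall.bound hε)
  obtain ⟨N, hN⟩ := exists_nat_gt (M / r)
  have hN0 : (0 : ℝ) < N := lt_of_le_of_lt (by positivity) hN
  have hslice : ∀ g : C(X, ℝ), ‖g‖ ≤ M / N → ‖κ g‖ ≤ ε * (M / N) := fun g hg => by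
    have hgr : dist g 0 < r := by
      rw [dist_zero_right]
      exact hg.trans_lt ((div_lt_comm₀ hr hN0).1 hN)
    exact (hκr hgr).trans (by gcongr)
  have hbound := fun x => abs_le.1 (f.norm_coe_le_norm x)
  calc ‖κ f‖ = ‖κ (f + algebraMap ℝ _ ‖f‖)‖ := by rw [htrans]
    _ ≤ N * (ε * (M / N)) := by
      refine hκ.norm_le_of_le_natCast_mul htrans (by positivity) hslice N (fun x => ?_) fun x => ?_
      · simpa using neg_le_iff_add_nonneg.1 (hbound x).1
      · rw [mul_div_cancel₀ _ hN0.ne']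
        simpa [M] using (hbound x).2
    _ = M * ε := by field_simp

variable [NormedSpace ℝ F] {P : C(X, ℝ) → F}

lemma OrthogonallyAdditive.fderiv_one (hP : OrthogonallyAdditive P) (hd : ContDiff ℝ 1 P)
    (h0 : fderiv ℝ P 0 = 0) : OrthogonallyAdditive fun f => fderiv ℝ P f 1 := by
  intro f g hfg _
  have hcont : Continuous fun f => fderiv ℝ P f 1 :=
    (hd.continuous_fderiv one_ne_zero).clm_apply continuous_const
  let S : Set C(X, ℝ) := {f' | fderiv ℝ P (f' + g) 1 = fderiv ℝ P f' 1 + fderiv ℝ P g 1}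
  have hS : IsClosed S :=
    isClosed_eq (hcont.comp (continuous_add_const g)) (hcont.add continuous_const)
  suffices f ∈ closure S from hS.closure_subset this
  refine Metric.mem_closure_iff.2 fun ε hε => ?_
  obtain ⟨f', w, hff', hwg, hwf⟩ := exists_cutoff_of_mul_eq_zero hfg (half_pos hε)
  refine ⟨f', ?_, by rw [dist_eq_norm]; linarith⟩
  exact hP.fderiv_add_apply_one (hd.differentiable one_ne_zero) h0 hwg (by rw [mul_comm, hwg]) hwf
    (by rw [mul_comm, hwf])

theorem OrthogonallyAdditive.exists_clm_pow_continuousMap {m : ℕ} (hP : OrthogonallyAdditive P)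
    (hhom : PosHomogeneous (m + 1) P) (hd : ContDiff ℝ (m + 1) P) :
    ∃ T : C(X, ℝ) →L[ℝ] F, ∀ f, P f = T (f ^ (m + 1)) := by
  induction m generalizing P with
  | zero =>
    have hd0 : DifferentiableAt ℝ P 0 := hd.differentiable (by simp) 0
    exact ⟨fderiv ℝ P 0, fun f => by rw [zero_add, pow_one, hhom.eq_fderiv_zero hd0]⟩
  | succ m ih =>
    have hd1 : ContDiff ℝ 1 P := hd.of_le (by push_cast; exact le_add_self)
    have hPd : Differentiable ℝ P := hd1.differentiable one_ne_zero
    obtain ⟨T, hT⟩ := ih (P := fun f => fderiv ℝ P f 1) (hP.fderiv_one hd1 hhom.fderiv.map_zero)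
      (fun t ht f => by simp only [hhom.fderiv t ht, smul_apply])
      ((hd.fderiv_right (by push_cast; rfl)).clm_apply contDiff_const)
    let Q : C(X, ℝ) → F := fun f => (m + 2 : ℝ)⁻¹ • T (f ^ (m + 2))
    have hQ : OrthogonallyAdditive Q := fun f g hfg hgf => by
      simp only [Q, orthogonallyAdditive_pow (m + 1) f g hfg hgf, map_add, smul_add]
    have hQhom : PosHomogeneous (m + 2) Q := fun t _ f => by
      simp only [Q, smul_pow, map_smul, smul_comm (t ^ (m + 2))]
    have hQd : Differentiable ℝ Q := by fun_prop
    have hQ1 : ∀ f, fderiv ℝ Q f 1 = fderiv ℝ P f 1 := fun f => by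
      have h := fderiv_clm_pow_apply_of_commute ((m + 2 : ℝ)⁻¹ • T) (m + 2) (Commute.one_right f)
      have hm : (m + 2 : ℝ) ≠ 0 := by positivity
      rw [hT]
      simpa [← Nat.cast_smul_eq_nsmul ℝ, hm] using h
    refine ⟨(m + 2 : ℝ)⁻¹ • T, fun f => sub_eq_zero.1 ?_⟩
    refine (hP.sub hQ).eq_zero_of_isLittleO ?_
      ((hhom.sub hQhom).isLittleO_self ((hPd 0).sub (hQd 0))) f
    refine map_add_algebraMap_of_fderiv_one_eq_zero (hPd.sub hQd) fun g => ?_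
    rw [fderiv_sub (hPd g) (hQd g), sub_apply, hQ1, sub_self]

theorem OrthogonallyAdditive.nsmul_eq_fderiv_one_pow {m : ℕ} (hP : OrthogonallyAdditive P)
    (hhom : PosHomogeneous (m + 1) P) (hd : ContDiff ℝ (m + 1) P) (f : C(X, ℝ)) :
    (m + 1) • P f = fderiv ℝ P 1 (f ^ (m + 1)) := by
  obtain ⟨T, hT⟩ := hP.exists_clm_pow_continuousMap hhom hd
  rw [funext hT, fderiv_clm_pow_apply_of_commute T (m + 1) (Commute.one_left _), one_pow, one_mul]

end ContinuousMap

section CStarAlgebra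

lemma eq_of_eqOn_selfAdjoint {E F : Type*} [NormedAddCommGroup E] [NormedSpace ℂ E]
    [StarAddMonoid E] [StarModule ℂ E] [NormedAddCommGroup F] [NormedSpace ℂ F] [CompleteSpace F]
    {P Q : E → F} (hP : Differentiable ℂ P) (hQ : Differentiable ℂ Q)
    (h : ∀ a, IsSelfAdjoint a → P a = Q a) : P = Q := by
  funext x
  let line : ℂ → E := fun z => (realPart x : E) + z • (imaginaryPart x : E)
  have hline : Differentiable ℂ line := by fun_prop
  have hreal : ∀ t : ℝ, P (line t) = Q (line t) := fun t =>
    h _ ((realPart x).2.add (by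
      simpa only [Complex.coe_smul] using (IsSelfAdjoint.all t).smul (imaginaryPart x).2))
  have hfreq : ∃ᶠ z : ℂ in 𝓝[≠] 0, P (line z) = Q (line z) := by
    have hofReal : Tendsto ((↑) : ℝ → ℂ) (𝓝[≠] 0) (𝓝[≠] 0) := by
      rw [← Complex.ofReal_zero]
      exact Complex.continuous_ofReal.continuousWithinAt.tendsto_nhdsWithin fun t => by simp
    exact hofReal.frequently (Frequently.of_forall hreal)
  have hall : P ∘ line = Q ∘ line := AnalyticOnNhd.eq_of_frequently_eq
    (fun z _ => (hP.comp hline).analyticAt z) (fun z _ => (hQ.comp hline).analyticAt z) hfreq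
  simpa [line, realPart_add_I_smul_imaginaryPart] using congrFun hall Complex.I

variable {A F : Type*} [CStarAlgebra A] [NormedAddCommGroup F] {n : ℕ} {P : A → F}

lemma OrthogonallyAdditive.nsmul_eq_fderiv_one_pow_of_isSelfAdjoint [NormedSpace ℝ F]
    (hP : OrthogonallyAdditive P) (hhom : PosHomogeneous (n + 1) P) (hd : ContDiff ℝ (n + 1) P)
    {x : A} (hx : IsSelfAdjoint x) : (n + 1) • P x = fderiv ℝ P 1 (x ^ (n + 1)) := by
  let φ : C(spectrum ℝ x, ℝ) →L[ℝ] A :=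
    ⟨(cfcHom hx : C(spectrum ℝ x, ℝ) →⋆ₐ[ℝ] A).toLinearMap, cfcHom_continuous hx⟩
  have hφ : ∀ f, φ f = cfcHom hx f := fun f => rfl
  have hcomp : fderiv ℝ (P ∘ φ) 1 = fderiv ℝ P 1 ∘L φ := by
    rw [fderiv_comp 1 (hd.differentiable (by simp) _) φ.differentiableAt, φ.fderiv, hφ, map_one]
  have h := (hP.comp (cfcHom hx)).nsmul_eq_fderiv_one_pow
    (fun t ht f => by simp only [Function.comp_apply, map_smul, hhom t ht]) (hd.comp φ.contDiff)
    ((ContinuousMap.id ℝ).restrict (spectrum ℝ x))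
  change _ = fderiv ℝ (P ∘ φ) 1 _ at h
  rwa [hcomp, ContinuousLinearMap.comp_apply, hφ, map_pow, Function.comp_apply, cfcHom_id] at h

theorem OrthogonallyAdditive.exists_clm_pow [NormedSpace ℂ F] [CompleteSpace F]
    (hP : OrthogonallyAdditive P) (hhom : PosHomogeneous (n + 1) P) (hd : ContDiff ℂ (n + 1) P) :
    ∃ T : A →L[ℂ] F, ∀ a, P a = T (a ^ (n + 1)) := by
  have hPd : Differentiable ℂ P := hd.differentiable (by simp)
  have hn : ((n + 1 : ℕ) : ℂ) ≠ 0 := Nat.cast_ne_zero.2 n.succ_ne_zero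
  let T : A →L[ℂ] F := ((n + 1 : ℕ) : ℂ)⁻¹ • fderiv ℂ P 1
  refine ⟨T, congrFun (eq_of_eqOn_selfAdjoint hPd (by fun_prop) fun x hx => ?_)⟩
  have h := hP.nsmul_eq_fderiv_one_pow_of_isSelfAdjoint hhom (hd.restrict_scalars ℝ) hx
  rw [(hPd 1).fderiv_restrictScalars ℝ, ContinuousLinearMap.coe_restrictScalars',
    ← Nat.cast_smul_eq_nsmul ℂ] at h
  rw [smul_apply, ← h, inv_smul_smul₀ hn]

end CStarAlgebra

namespace IsHomogPolynomial

variable {E F : Type*} [NormedAddCommGroup E] [NormedSpace ℂ E] [NormedAddCommGroup F]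
  [NormedSpace ℂ F] {n : ℕ} {P : E → F}

protected lemma contDiff (hP : IsHomogPolynomial n P) {k : WithTop ℕ∞} : ContDiff ℂ k P := by
  obtain ⟨L, -, hL⟩ := hP
  rw [funext hL]
  exact L.contDiff.comp (contDiff_pi.2 fun _ => contDiff_id)

lemma posHomogeneous (hP : IsHomogPolynomial n P) : PosHomogeneous n P := by
  obtain ⟨L, -, hL⟩ := hP
  intro t _ x
  simpa [hL, ← Complex.ofReal_pow] using L.map_smul_univ (fun _ => (t : ℂ)) fun _ => x

end IsHomogPolynomial

section Normal

lemma isStarNormal_add_smul_one {R A : Type*} [CommSemiring R] [StarRing R] [Semiring A]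
    [StarRing A] [Algebra R A] [StarModule R A] (a : A) [IsStarNormal a] (c : R) :
    IsStarNormal (a + c • 1) := by
  refine ⟨?_⟩
  rw [star_add, star_smul, star_one]
  exact (star_comm_self.add_left ((Commute.one_left a).smul_left _)).add_right
    ((Commute.one_right _).smul_right c)

variable {A : Type*} [CStarAlgebra A]

lemma norm_pow_of_isStarNormal (a : A) [IsStarNormal a] {n : ℕ} (hn : n ≠ 0) :
    ‖a ^ n‖ = ‖a‖ ^ n := by
  have hpow : IsStarNormal (a ^ n) :=
    ⟨by simpa only [star_pow] using (star_comm_self (x := a)).pow_pow n n⟩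
  refine le_antisymm (norm_pow_le' a hn.bot_lt) (?_ : ‖a‖₊ ^ n ≤ ‖a ^ n‖₊)
  rw [← ENNReal.coe_le_coe, ENNReal.coe_pow, ← IsStarNormal.spectralRadius_eq_nnnorm,
    ← IsStarNormal.spectralRadius_eq_nnnorm]
  exact spectrum.spectralRadius_pow_le a n hn

lemma exists_isStarNormal_pow_eq {a : A} [IsStarNormal a]
    (ha : spectrum ℂ a ⊆ Complex.slitPlane) {n : ℕ} (hn : n ≠ 0) :
    ∃ y : A, IsStarNormal y ∧ y ^ n = a := by
  have hroot : ContinuousOn (fun z : ℂ => z ^ (n : ℂ)⁻¹) (spectrum ℂ a) := fun z hz =>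
    (continuousAt_cpow_const (ha hz)).continuousWithinAt
  refine ⟨cfc (fun z : ℂ => z ^ (n : ℂ)⁻¹) a, cfc_predicate _ a, ?_⟩
  simp only [← cfc_pow _ n a hroot, Complex.cpow_nat_inv_pow _ hn, cfc_id' ℂ a]

lemma spectrum_add_I_smul_one_subset_slitPlane {a : A} (ha : IsSelfAdjoint a) {s : ℝ} (hs : s ≠ 0) :
    spectrum ℂ (a + (s * I) • 1) ⊆ Complex.slitPlane := by
  rw [← Algebra.algebraMap_eq_smul_one, ← spectrum.add_singleton_eq]
  rintro _ ⟨z, hz, _, rfl, rfl⟩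
  refine Or.inr ?_
  simpa [ha.im_eq_zero_of_mem_spectrum hz] using hs

lemma eq_zero_of_forall_add_sq_le {k : Type*} [Field k] [LinearOrder k] [IsStrictOrderedRing k]
    {x C : k} (h : ∀ s, (x + s) ^ 2 ≤ C + s ^ 2) : x = 0 := by
  by_contra hx
  have hs := h (C / (2 * x))
  have hC : 2 * x * (C / (2 * x)) = C := by field_simp
  nlinarith [sq_pos_of_ne_zero hx]

lemma norm_add_I_smul_one_sq_le {a : A} (ha : IsSelfAdjoint a) (s : ℝ) :
    ‖a + (s * I) • 1‖ ^ 2 ≤ ‖a‖ ^ 2 + s ^ 2 := by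
  have hI : ((s * I) • (1 : A)) * ((s * I) • 1) = -(s ^ 2 • 1) := by
    rw [smul_mul_smul_comm, mul_one, mul_mul_mul_comm, Complex.I_mul_I, mul_neg_one, neg_smul, ← sq,
      ← Complex.ofReal_pow, Complex.coe_smul]
  have hstar : star (a + (s * I) • 1) * (a + (s * I) • 1) = a ^ 2 + s ^ 2 • 1 := by
    have h : star ((s * I) • (1 : A)) = -((s * I) • 1) := by simp
    rw [star_add, ha.star_eq, h, add_mul, mul_add, mul_add, neg_mul, neg_mul, hI,
      mul_smul_one, smul_one_mul, ← sq]
    abel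
  have hone : ‖s ^ 2 • (1 : A)‖ ≤ s ^ 2 := by
    have := IsStarProjection.one (R := A) |>.norm_le
    rw [norm_smul, Real.norm_of_nonneg (sq_nonneg s)]
    exact mul_le_of_le_one_right (sq_nonneg s) this
  calc ‖a + (s * I) • 1‖ ^ 2 = ‖a ^ 2 + s ^ 2 • 1‖ := by
        rw [← hstar, CStarRing.norm_star_mul_self, sq]
    _ ≤ ‖a‖ ^ 2 + s ^ 2 := norm_add_le_of_le (norm_pow_le' a two_pos) hone

lemma isSelfAdjoint_of_norm_add_I_smul_one_sq_le {a : A} {C : ℝ}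
    (h : ∀ s : ℝ, ‖a + (s * I) • 1‖ ^ 2 ≤ C + s ^ 2) : IsSelfAdjoint a := by
  have hy : IsSelfAdjoint (imaginaryPart a : A) := (imaginaryPart a).2
  have himag : ∀ s : ℝ, (imaginaryPart (a + (s * I) • 1) : A) =
      imaginaryPart a + algebraMap ℝ A s := fun s => by
    have hone : (realPart (s • (1 : A)) : A) = s • 1 :=
      IsSelfAdjoint.coe_realPart ((IsSelfAdjoint.all s).smul (IsSelfAdjoint.one A))
    rw [mul_comm, mul_smul, Complex.coe_smul, map_add, imaginaryPart_I_smul, AddSubgroup.coe_add,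
      hone, Algebra.algebraMap_eq_smul_one]
  have hspec : spectrum ℝ (imaginaryPart a : A) ⊆ {0} := fun x hx => by
    refine eq_zero_of_forall_add_sq_le (C := C) fun s => ?_
    have hx' : ‖x + s‖ ≤ ‖(imaginaryPart (a + (s * I) • 1) : A)‖ := by
      have := norm_apply_le_norm_cfc (fun t => t + s) (imaginaryPart a : A) hx
      rwa [cfc_add_const s (fun t => t) _, cfc_id' ℝ (imaginaryPart a : A), ← himag] at this
    calc (x + s) ^ 2 = ‖x + s‖ ^ 2 := (sq_abs _).symm
      _ ≤ ‖a + (s * I) • 1‖ ^ 2 := by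
        gcongr
        exact hx'.trans (imaginaryPart.norm_le (a + (s * I) • 1))
      _ ≤ C + s ^ 2 := h s
  rw [← imaginaryPart_eq_zero_iff]
  exact Subtype.ext (CFC.eq_zero_of_spectrum_subset_zero (R := ℝ) _ hspec)

end Normal

section Isometry

variable {A B : Type*} [CStarAlgebra A] [CStarAlgebra B] {J : A →ₗ[ℂ] B}

lemma norm_map_add_I_smul_one {F : Type*} [NormedAddCommGroup F] [NormedSpace ℂ F] {T : A →ₗ[ℂ] F}
    {n : ℕ} (hn : n ≠ 0) (hT : ∀ y : A, IsStarNormal y → ‖T (y ^ n)‖ = ‖y ^ n‖) {a : A}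
    (ha : IsSelfAdjoint a) (s : ℝ) : ‖T (a + (s * I) • 1)‖ = ‖a + (s * I) • 1‖ := by
  have hne : ∀ t ∈ ({0}ᶜ : Set ℝ), ‖T a + (t * I) • T 1‖ = ‖a + (t * I) • 1‖ := fun t ht => by
    have := ha.isStarNormal
    have := isStarNormal_add_smul_one a (t * I)
    obtain ⟨y, hy, hya⟩ :=
      exists_isStarNormal_pow_eq (spectrum_add_I_smul_one_subset_slitPlane ha ht) hn
    simpa only [hya, map_add, map_smul] using hT y hy
  rw [map_add, map_smul]
  exact congrFun (Continuous.ext_on (f := fun t : ℝ => ‖T a + (t * I) • T 1‖)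
    (dense_compl_singleton (0 : ℝ)) (by fun_prop) (by fun_prop) hne) s

lemma isSelfAdjoint_map_of_norm_map_le (hJ1 : J 1 = 1) {a : A} (ha : IsSelfAdjoint a)
    (hJ : ∀ s : ℝ, ‖J (a + (s * I) • 1)‖ ≤ ‖a + (s * I) • 1‖) : IsSelfAdjoint (J a) :=
  isSelfAdjoint_of_norm_add_I_smul_one_sq_le (C := ‖a‖ ^ 2) fun s => by
    rw [← hJ1, ← map_smul, ← map_add]
    exact (pow_le_pow_left₀ (norm_nonneg _) (hJ s) 2).trans (norm_add_I_smul_one_sq_le ha s)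

lemma map_star_of_isSelfAdjoint_map {E F : Type*} [AddCommGroup E] [Module ℂ E] [StarAddMonoid E]
    [StarModule ℂ E] [AddCommGroup F] [Module ℂ F] [StarAddMonoid F] [StarModule ℂ F]
    {J : E →ₗ[ℂ] F} (hJ : ∀ a, IsSelfAdjoint a → IsSelfAdjoint (J a)) (a : E) :
    J (star a) = star (J a) := by
  have hre := hJ _ (realPart a).2
  have him := hJ _ (imaginaryPart a).2
  rw [← realPart_add_I_smul_imaginaryPart a]
  simp only [star_add, star_smul, map_add, map_smul, hre.star_eq, him.star_eq,
    selfAdjoint.star_val_eq]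

lemma injective_of_isSelfAdjoint_map {E F : Type*} [AddCommGroup E] [Module ℂ E] [StarAddMonoid E]
    [StarModule ℂ E] [AddCommGroup F] [Module ℂ F] [StarAddMonoid F] [StarModule ℂ F]
    {J : E →ₗ[ℂ] F} (hJ : ∀ a, IsSelfAdjoint a → IsSelfAdjoint (J a))
    (hJ0 : ∀ a, IsSelfAdjoint a → J a = 0 → a = 0) : Function.Injective J := by
  have hstar := map_star_of_isSelfAdjoint_map hJ
  rw [injective_iff_map_eq_zero]
  intro a ha
  have hre : (realPart a : E) = 0 := hJ0 _ (realPart a).2 (by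
    rw [realPart_apply_coe, LinearMap.map_smul_of_tower, map_add, hstar, ha]; simp)
  have him : (imaginaryPart a : E) = 0 := hJ0 _ (imaginaryPart a).2 (by
    rw [imaginaryPart_apply_coe, map_smul, LinearMap.map_smul_of_tower, map_sub, hstar, ha]; simp)
  rw [← realPart_add_I_smul_imaginaryPart a, hre, him, smul_zero, add_zero]

lemma map_nonneg_of_norm_map_le [PartialOrder A] [StarOrderedRing A] [PartialOrder B]
    [StarOrderedRing B] (hJ1 : J 1 = 1) (hsa : ∀ a, IsSelfAdjoint a → IsSelfAdjoint (J a))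
    (hJ : ∀ a, IsSelfAdjoint a → ‖J a‖ ≤ ‖a‖) {a : A} (ha : 0 ≤ a) : 0 ≤ J a := by
  have ha' : 0 ≤ algebraMap ℝ A ‖a‖ - a :=
    sub_nonneg.2 (IsSelfAdjoint.of_nonneg ha).le_algebraMap_norm_self
  have hnorm : ‖J (algebraMap ℝ A ‖a‖ - a)‖ ≤ ‖a‖ := by
    refine (hJ _ (.of_nonneg ha')).trans ?_
    rw [CStarAlgebra.norm_le_iff_le_algebraMap _ (norm_nonneg _) ha']
    exact sub_le_self _ ha
  have hle : J (algebraMap ℝ A ‖a‖ - a) ≤ algebraMap ℝ B ‖a‖ :=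
    (hsa _ (.of_nonneg ha')).le_algebraMap_norm_self.trans (algebraMap_mono B hnorm)
  have hscalar : J (algebraMap ℝ A ‖a‖) = algebraMap ℝ B ‖a‖ := by
    rw [Algebra.algebraMap_eq_smul_one, LinearMap.map_smul_of_tower, hJ1,
      Algebra.algebraMap_eq_smul_one]
  simpa [hscalar] using hle

end Isometry

section Jordan

lemma add_sq_eq_add_mul_add_mul {R : Type*} [Ring R] (a b : R) :
    (a + b) ^ 2 = a ^ 2 + b ^ 2 + (a * b + b * a) := by
  noncomm_ring

lemma add_I_smul_sq {R : Type*} [Ring R] [Algebra ℂ R] (a b : R) :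
    (a + I • b) ^ 2 = a ^ 2 - b ^ 2 + I • (a * b + b * a) := by
  rw [add_sq_eq_add_mul_add_mul, smul_pow, Complex.I_sq, neg_one_smul, ← sub_eq_add_neg,
    mul_smul_comm, smul_mul_assoc, smul_add]

lemma map_mul_add_mul_of_map_sq {R S G : Type*} [Ring R] [Ring S] [FunLike G R S]
    [AddMonoidHomClass G R S] {J : G} {a b : R} (ha : J (a ^ 2) = J a ^ 2)
    (hb : J (b ^ 2) = J b ^ 2) (hab : J ((a + b) ^ 2) = J (a + b) ^ 2) :
    J (a * b + b * a) = J a * J b + J b * J a := by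
  rwa [add_sq_eq_add_mul_add_mul, map_add, map_add, map_add J a, add_sq_eq_add_mul_add_mul, ha, hb,
    add_right_inj] at hab

lemma map_mul_add_mul_of_map_sq_selfAdjoint {R S : Type*} [Ring R] [StarRing R] [Algebra ℂ R]
    [StarModule ℂ R] [Ring S] [Algebra ℂ S] {J : R →ₗ[ℂ] S}
    (hJ : ∀ a, IsSelfAdjoint a → J (a ^ 2) = J a ^ 2) (a b : R) :
    J (a * b + b * a) = J a * J b + J b * J a := by
  have hsq : ∀ c, J (c ^ 2) = J c ^ 2 := fun c => by
    have hx := (realPart c).2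
    have hy := (imaginaryPart c).2
    have hxy := map_mul_add_mul_of_map_sq (hJ _ hx) (hJ _ hy) (hJ _ (hx.add hy))
    rw [← realPart_add_I_smul_imaginaryPart c, add_I_smul_sq, map_add J (_ - _), map_sub, map_smul,
      hJ _ hx, hJ _ hy, hxy, map_add, map_smul, add_I_smul_sq]
  exact map_mul_add_mul_of_map_sq (hsq a) (hsq b) (hsq (a + b))

lemma map_pow_of_map_mul_add_mul {R S G : Type*} [Ring R] [Ring S] [IsAddTorsionFree S]
    [FunLike G R S] [AddMonoidHomClass G R S] {J : G} (hJ1 : J 1 = 1)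
    (hJ : ∀ a b, J (a * b + b * a) = J a * J b + J b * J a)
    (a : R) (k : ℕ) : J (a ^ k) = J a ^ k := by
  induction k with
  | zero => simp only [pow_zero, hJ1]
  | succ k ih =>
    have h := hJ a (a ^ k)
    rw [ih, ← pow_succ, ← pow_succ', ← pow_succ, ← pow_succ', ← two_nsmul, ← two_nsmul,
      map_nsmul] at h
    exact nsmul_right_injective two_ne_zero h

end Jordan

section Kadison

open Finset Polynomial

-- The variance of weights `c` with respect to the operator-valued distribution `p` is nonnegative.
lemma sq_sum_smul_le_sum_sq_smul {ι B : Type*} [Ring B] [StarRing B] [PartialOrder B]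
    [StarOrderedRing B] [Algebra ℝ B] [StarModule ℝ B] {s : Finset ι} {p : ι → B} (c : ι → ℝ)
    (hp : ∀ i ∈ s, 0 ≤ p i) (hp1 : ∑ i ∈ s, p i = 1) :
    (∑ i ∈ s, c i • p i) ^ 2 ≤ ∑ i ∈ s, c i ^ 2 • p i := by
  set m : B := ∑ i ∈ s, c i • p i with hm
  have hmsa : IsSelfAdjoint m :=
    isSelfAdjoint_sum s fun i hi => (IsSelfAdjoint.all _).smul (IsSelfAdjoint.of_nonneg (hp i hi))
  have hvar : 0 ≤ ∑ i ∈ s, (c i • 1 - m) * p i * (c i • 1 - m) := sum_nonneg fun i hi =>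
    IsSelfAdjoint.conjugate_nonneg (hp i hi)
      (((IsSelfAdjoint.all _).smul (IsSelfAdjoint.one B)).sub hmsa)
  have hexp : ∀ i, (c i • 1 - m) * p i * (c i • 1 - m) =
      c i ^ 2 • p i - c i • p i * m - m * (c i • p i) + m * p i * m := fun i => by
    simp only [sub_mul, mul_sub, smul_mul_assoc, mul_smul_comm, one_mul, mul_one, smul_sub,
      smul_smul, sq]
    abel
  simp only [hexp, sum_add_distrib, sum_sub_distrib, ← sum_mul, ← mul_sum, hp1, ← hm, mul_one,
    ← sq] at hvar
  rw [← sub_nonneg]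
  convert hvar using 1
  abel

lemma sum_sq_smul_bernsteinPolynomial (N : ℕ) (hN : N ≠ 0) :
    ∑ k ∈ range (N + 1), (k / N : ℝ) ^ 2 • bernsteinPolynomial ℝ N k =
      X ^ 2 + (N : ℝ)⁻¹ • (X - X ^ 2) := by
  have hNR : (N : ℝ) ≠ 0 := Nat.cast_ne_zero.2 hN
  have hcast : ∀ k : ℕ, ((k * (k - 1) : ℕ) : ℝ) = k * (k - 1) := fun k => by
    cases k <;> simp
  have hsq : ∀ k : ℕ, (k / N : ℝ) ^ 2 • bernsteinPolynomial ℝ N k =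
      (N ^ 2 : ℝ)⁻¹ • ((k * (k - 1)) • bernsteinPolynomial ℝ N k + k • bernsteinPolynomial ℝ N k) :=
    fun k => by
      simp only [← Nat.cast_smul_eq_nsmul ℝ, hcast, ← add_smul, smul_smul]
      congr 1
      ring
  rw [sum_congr rfl fun k _ => hsq k, ← smul_sum, sum_add_distrib, bernsteinPolynomial.sum_mul_smul,
    bernsteinPolynomial.sum_smul]
  simp only [← Nat.cast_smul_eq_nsmul ℝ, hcast]
  match_scalars
  · field_simp
    ring
  · field_simp

lemma sum_smul_bernsteinPolynomial (N : ℕ) (hN : N ≠ 0) :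
    ∑ k ∈ range (N + 1), (k / N : ℝ) • bernsteinPolynomial ℝ N k = X := by
  have hNR : (N : ℝ) ≠ 0 := Nat.cast_ne_zero.2 hN
  have h := congr((N : ℝ)⁻¹ • $(bernsteinPolynomial.sum_smul ℝ N))
  simpa only [← Nat.cast_smul_eq_nsmul ℝ, smul_sum, smul_smul, inv_mul_cancel₀ hNR, one_smul,
    ← div_eq_inv_mul] using h

variable {A B : Type*} [CStarAlgebra A] [CStarAlgebra B] [PartialOrder A] [StarOrderedRing A]
  [PartialOrder B] [StarOrderedRing B]

lemma aeval_bernsteinPolynomial_nonneg {b : A} (hb0 : 0 ≤ b) (hb1 : b ≤ 1) (N k : ℕ) :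
    0 ≤ aeval b (bernsteinPolynomial ℝ N k) := by
  have hb : IsSelfAdjoint b := .of_nonneg hb0
  rw [← cfc_polynomial _ b hb]
  refine cfc_nonneg fun t ht => ?_
  have ht0 : 0 ≤ t := spectrum_nonneg_of_nonneg hb0 ht
  have ht1 : 0 ≤ 1 - t :=
    sub_nonneg.2 ((le_algebraMap_iff_spectrum_le hb).1 (by simpa using hb1) t ht)
  simp only [bernsteinPolynomial, eval_mul, eval_pow, eval_sub, eval_X, eval_one, eval_natCast]
  positivity

-- The Bernstein polynomials discretize `φ` into a distribution with mean `φ b` and second moment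
-- close to `φ (b ^ 2)`.
lemma kadison_inequality_of_le_one (φ : A →ₚ[ℝ] B) (hφ : φ 1 = 1) {b : A} (hb0 : 0 ≤ b)
    (hb1 : b ≤ 1) : φ b ^ 2 ≤ φ (b ^ 2) := by
  have hN : ∀ N : ℕ, N ≠ 0 → φ b ^ 2 ≤ φ (b ^ 2) + (N : ℝ)⁻¹ • φ (b - b ^ 2) := fun N hN => by
    let p : ℕ → B := fun k => φ (aeval b (bernsteinPolynomial ℝ N k))
    have hmoment : ∀ c : ℕ → ℝ, ∑ k ∈ range (N + 1), c k • p k =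
        φ (aeval b (∑ k ∈ range (N + 1), c k • bernsteinPolynomial ℝ N k)) := fun c => by
      simp only [p, map_sum, map_smul]
    have hsum : ∑ k ∈ range (N + 1), p k = 1 := by
      simpa [bernsteinPolynomial.sum, hφ] using hmoment 1
    have h := sq_sum_smul_le_sum_sq_smul (fun k : ℕ => (k / N : ℝ))
      (fun k _ => φ.map_nonneg (aeval_bernsteinPolynomial_nonneg hb0 hb1 N k)) hsum
    rw [hmoment, hmoment, sum_smul_bernsteinPolynomial N hN,
      sum_sq_smul_bernsteinPolynomial N hN] at h
    simpa only [map_add, map_smul, map_sub, map_pow, aeval_X] using h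
  have hlim : Tendsto (fun N : ℕ => φ (b ^ 2) + (N : ℝ)⁻¹ • φ (b - b ^ 2)) atTop
      (𝓝 (φ (b ^ 2))) := by
    simpa only [zero_smul, add_zero] using
      ((tendsto_inv_atTop_nhds_zero_nat (𝕜 := ℝ)).smul_const (φ (b - b ^ 2))).const_add (φ (b ^ 2))
  exact ge_of_tendsto hlim ((eventually_ne_atTop 0).mono hN)

lemma kadison_inequality (φ : A →ₚ[ℝ] B) (hφ : φ 1 = 1) {a : A} (ha : IsSelfAdjoint a) :
    φ a ^ 2 ≤ φ (a ^ 2) := by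
  let r : ℝ := 2 * ‖a‖ + 1
  have hr : 0 < r := by positivity
  let b : A := r⁻¹ • (a + algebraMap ℝ A ‖a‖)
  have hb0 : 0 ≤ b :=
    smul_nonneg (by positivity) (neg_le_iff_add_nonneg.1 ha.neg_algebraMap_norm_le_self)
  have hb1 : b ≤ 1 := by
    have ha' := ha.le_algebraMap_norm_self
    rw [inv_smul_le_iff_of_pos hr]
    calc a + algebraMap ℝ A ‖a‖ ≤ algebraMap ℝ A ‖a‖ + algebraMap ℝ A ‖a‖ := by gcongr
      _ = (2 * ‖a‖) • 1 := by rw [Algebra.algebraMap_eq_smul_one, ← add_smul, two_mul]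
      _ ≤ r • 1 := smul_le_smul_of_nonneg_right (by simp [r]) zero_le_one
  have hab : a = r • b - ‖a‖ • 1 := by
    simp [b, smul_inv_smul₀ hr.ne', Algebra.algebraMap_eq_smul_one]
  have hdefect : φ (a ^ 2) - φ a ^ 2 = r ^ 2 • (φ (b ^ 2) - φ b ^ 2) := by
    rw [hab]
    simp only [sq, sub_mul, mul_sub, map_sub, map_smul, hφ, smul_mul_smul_comm, one_mul, mul_one]
    match_scalars <;> ring
  rw [← sub_nonneg, hdefect]
  exact smul_nonneg (by positivity)
    (sub_nonneg.2 (kadison_inequality_of_le_one φ hφ hb0 hb1))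

lemma map_sq_of_leftInverse_of_rightInverse (φ : A →ₚ[ℝ] B) (ψ : B →ₚ[ℝ] A)
    (hψφ : Function.LeftInverse ψ φ) (hφψ : Function.RightInverse ψ φ) (hφ1 : φ 1 = 1) {a : A}
    (ha : IsSelfAdjoint a) : φ (a ^ 2) = φ a ^ 2 := by
  have hψ1 : ψ 1 = 1 := by rw [← hφ1, hψφ]
  have hφa : IsSelfAdjoint (φ a) := by
    refine .of_ge (OrderHomClass.mono φ ha.neg_algebraMap_norm_le_self) ?_
    rw [map_neg, Algebra.algebraMap_eq_smul_one, map_smul, hφ1]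
    exact ((IsSelfAdjoint.all _).smul (.one B)).neg
  have hψ : a ^ 2 ≤ ψ (φ a ^ 2) := by
    simpa only [hψφ a] using kadison_inequality ψ hψ1 hφa
  exact le_antisymm ((OrderHomClass.mono φ hψ).trans_eq (hφψ _)) (kadison_inequality φ hφ1 ha)

end Kadison

section JordanIsomorphism

variable {A B : Type*} [CStarAlgebra A] [CStarAlgebra B]

theorem map_sq_of_isometric_selfAdjoint (J : A ≃ₗ[ℂ] B) (hJ1 : J 1 = 1)
    (hsa : ∀ a, IsSelfAdjoint a → IsSelfAdjoint (J a))
    (hJ : ∀ a, IsSelfAdjoint a → ‖J a‖ = ‖a‖) {a : A} (ha : IsSelfAdjoint a) :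
    J (a ^ 2) = J a ^ 2 := by
  let := CStarAlgebra.spectralOrder A
  have := CStarAlgebra.spectralOrderedRing A
  let := CStarAlgebra.spectralOrder B
  have := CStarAlgebra.spectralOrderedRing B
  have hsymm1 : J.symm 1 = 1 := by rw [← hJ1, J.symm_apply_apply]
  have hsymm_sa : ∀ b, IsSelfAdjoint b → IsSelfAdjoint (J.symm b) := fun b hb => J.injective <| by
    have hstar : J (star (J.symm b)) = star (J (J.symm b)) :=
      map_star_of_isSelfAdjoint_map (J := J.toLinearMap) hsa _
    rw [hstar, J.apply_symm_apply, hb.star_eq]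
  have hsymm : ∀ b, IsSelfAdjoint b → ‖J.symm b‖ ≤ ‖b‖ := fun b hb => by
    rw [← hJ _ (hsymm_sa b hb), J.apply_symm_apply]
  let φ : A →ₚ[ℝ] B := .mk₀ (J.toLinearMap.restrictScalars ℝ) fun a =>
    map_nonneg_of_norm_map_le hJ1 hsa fun a ha => (hJ a ha).le
  let ψ : B →ₚ[ℝ] A := .mk₀ (J.symm.toLinearMap.restrictScalars ℝ) fun b =>
    map_nonneg_of_norm_map_le hsymm1 hsymm_sa hsymm
  exact map_sq_of_leftInverse_of_rightInverse φ ψ J.symm_apply_apply J.apply_symm_apply hJ1 ha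

theorem bijective_and_jordan_of_norm_map_pow_eq {J : A →ₗ[ℂ] B} {n : ℕ} (hn : n ≠ 0)
    (hJ1 : J 1 = 1) (hsurj : Function.Surjective J)
    (hJ : ∀ y : A, IsStarNormal y → ‖J (y ^ n)‖ = ‖y ^ n‖) :
    Function.Bijective J ∧ (∀ a b, J (a * b + b * a) = J a * J b + J b * J a) ∧
      ∀ a, J (star a) = star (J a) := by
  have hline := fun a (ha : IsSelfAdjoint a) => norm_map_add_I_smul_one hn hJ ha
  have hiso : ∀ a, IsSelfAdjoint a → ‖J a‖ = ‖a‖ := fun a ha => by simpa using hline a ha 0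
  have hsa : ∀ a, IsSelfAdjoint a → IsSelfAdjoint (J a) := fun a ha =>
    isSelfAdjoint_map_of_norm_map_le hJ1 ha fun s => (hline a ha s).le
  have hbij : Function.Bijective J :=
    ⟨injective_of_isSelfAdjoint_map hsa fun a ha h => by rw [← norm_eq_zero, ← hiso a ha, h,
      norm_zero], hsurj⟩
  exact ⟨hbij, map_mul_add_mul_of_map_sq_selfAdjoint fun a =>
    map_sq_of_isometric_selfAdjoint (.ofBijective J hbij) hJ1 hsa hiso,
    map_star_of_isSelfAdjoint_map hsa⟩

end JordanIsomorphism

/-- let `P : A → B` be an orthogonally additive `n`-homogeneous polynomial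
between unital C*-algebras with `h := P(1)` unitary, `B = span P(A)` and
`‖P(x)‖ = ‖x‖ⁿ` for all normal `x`.  Then `P(a) = h J(a)ⁿ` for a Jordan *-isomorphism
`J : A → B`. -/
theorem stmt_19 {A B : Type*} [CStarAlgebra A] [CStarAlgebra B]
    (n : ℕ) (hn : 0 < n) (P : A → B) (hP : IsHomogPolynomial n P)
    (horth : ∀ a b : A, a * b = 0 → b * a = 0 → P (a + b) = P a + P b)
    (hunitary : P 1 ∈ unitary B)
    (hspan : Submodule.span ℂ (Set.range P) = ⊤)
    (hiso : ∀ x : A, IsStarNormal x → ‖P x‖ = ‖x‖ ^ n) :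
    ∃ J : A →ₗ[ℂ] B, Function.Bijective J ∧
      (∀ a b : A, J (a * b + b * a) = J a * J b + J b * J a) ∧
      (∀ a : A, J (star a) = star (J a)) ∧
      ∀ a : A, P a = P 1 * (J a) ^ n := by
  obtain ⟨m, rfl⟩ := Nat.exists_eq_add_one.2 hn
  obtain ⟨T, hT⟩ := OrthogonallyAdditive.exists_clm_pow horth hP.posHomogeneous hP.contDiff
  let J : A →ₗ[ℂ] B := LinearMap.mulLeft ℂ (star (P 1)) ∘ₗ T
  have hJT : ∀ a, J a = star (P 1) * T a := fun a => rfl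
  have hTJ : ∀ a, T a = P 1 * J a := fun a => by
    rw [hJT, ← mul_assoc, Unitary.mul_star_self_of_mem hunitary, one_mul]
  have hT1 : P 1 = T 1 := by simpa only [one_pow] using hT 1
  have hJ1 : J 1 = 1 := by rw [hJT, ← hT1, Unitary.star_mul_self_of_mem hunitary]
  have hnorm : ∀ y : A, IsStarNormal y → ‖J (y ^ (m + 1))‖ = ‖y ^ (m + 1)‖ := fun y hy => by
    rw [hJT, CStarRing.norm_mem_unitary_mul _ (Unitary.star_mem hunitary), ← hT, hiso y hy,
      norm_pow_of_isStarNormal y hn.ne']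
  have hTtop : LinearMap.range T.toLinearMap = ⊤ := by
    rw [eq_top_iff, ← hspan, Submodule.span_le]
    exact Set.range_subset_iff.2 fun a => ⟨a ^ (m + 1), (hT a).symm⟩
  have hsurj : Function.Surjective J := fun b => by
    obtain ⟨a, ha : T a = P 1 * b⟩ := LinearMap.range_eq_top.1 hTtop (P 1 * b)
    exact ⟨a, by rw [hJT, ha, ← mul_assoc, Unitary.star_mul_self_of_mem hunitary, one_mul]⟩
  obtain ⟨hbij, hjordan, hstar⟩ := bijective_and_jordan_of_norm_map_pow_eq hn.ne' hJ1 hsurj hnorm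
  have : IsAddTorsionFree B := .of_isTorsionFree ℂ B
  exact ⟨J, hbij, hjordan, hstar, fun a => by
    rw [← map_pow_of_map_mul_add_mul hJ1 hjordan, ← hTJ, hT]⟩
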